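/- The limit relation θ(x)/x → 1 as x → ∞ holds if and only if π(x)·log x / x → 1 as x → ∞ (Chebyshev's equivalence between the theta function and the prime counting function asymptotics). -/

import Mathlib

/-- The prime counting function `π(x)`: the number of primes `p ≤ x`, as a real number. -/
noncomputable def primePi (x : ℝ) : ℝ :=
  (((Finset.range (⌊x⌋₊ + 1)).filter Nat.Prime).card : ℝ)

/-- The Chebyshev theta function `θ(x) = ∑_{p ≤ x, p prime} log p`. -/
noncomputable def theta (x : ℝ) : ℝ :=
  ∑ p ∈ (Finset.range (⌊x⌋₊ + 1)).filter Nat.Prime, Real.log p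

/-!
Abel summation gives `π(x) log x - θ(x) = log x * ∫ t in 2..x, θ(t) / (t log² t)`. Chebyshev's bound
`θ(t) = O(t)` makes the right-hand side `O(x / log x)`, so `θ(x) / x` and `π(x) log x / x` differ by
a quantity tending to zero.
-/

open Asymptotics Filter Topology

theorem theta_eq_chebyshev_theta (x : ℝ) : theta x = Chebyshev.theta x :=
  (Chebyshev.theta_eq_sum_primesLE x).symm

theorem primePi_eq_primeCounting_floor (x : ℝ) : primePi x = Nat.primeCounting ⌊x⌋₊ :=
  congrArg Nat.cast (Nat.primesLE_card_eq_primeCounting ⌊x⌋₊)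

theorem primePi_mul_log_sub_theta_isBigO :
    (fun x : ℝ => primePi x * Real.log x - theta x) =O[atTop] fun x => x / Real.log x := by
  have log_ne_zero : ∀ᶠ x : ℝ in atTop, Real.log x ≠ 0 :=
    Real.tendsto_log_atTop.eventually_ne_atTop 0
  have log_mul_isBigO :=
    (isBigO_refl Real.log atTop).mul Chebyshev.primeCounting_sub_theta_div_log_isBigO
  refine log_mul_isBigO.congr' ?_ ?_
  · filter_upwards [log_ne_zero] with x hx
    rw [theta_eq_chebyshev_theta, primePi_eq_primeCounting_floor]
    field_simp
  · filter_upwards [log_ne_zero] with x hx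
    field_simp

theorem div_log_isLittleO_id : (fun x : ℝ => x / Real.log x) =o[atTop] fun x => x := by
  have inv_log_isLittleO_one : (fun x : ℝ => (Real.log x)⁻¹) =o[atTop] fun _ => (1 : ℝ) :=
    (isLittleO_one_iff ℝ).mpr Real.tendsto_log_atTop.inv_tendsto_atTop
  simpa only [div_eq_mul_inv, mul_one] using
    (isBigO_refl (fun x : ℝ => x) atTop).mul_isLittleO inv_log_isLittleO_one

theorem primePi_mul_log_div_sub_theta_div_tendsto_zero :
    Tendsto (fun x : ℝ => primePi x * Real.log x / x - theta x / x) atTop (𝓝 0) := by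
  simpa only [sub_div] using
    (primePi_mul_log_sub_theta_isBigO.trans_isLittleO div_log_isLittleO_id).tendsto_div_nhds_zero

/-- Chebyshev's equivalence: `θ(x)/x → 1` as `x → ∞` if and only if
`π(x)·log x / x → 1` as `x → ∞`. -/
theorem theta_div_tendsto_iff_primePi_mul_log_div_tendsto :
    Filter.Tendsto (fun x : ℝ => theta x / x) Filter.atTop (nhds 1) ↔
      Filter.Tendsto (fun x : ℝ => primePi x * Real.log x / x) Filter.atTop (nhds 1) := by
  refine (tendsto_iff_of_dist ?_).symm
  simpa only [Real.dist_eq, abs_zero] using primePi_mul_log_div_sub_theta_div_tendsto_zero.abs
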